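/- arXiv:1010.0226 — 3 statements merged into one kernel-verified Lean document; each statement's English description precedes it below -/
import Mathlib

section
/- Equivocation converse of the side-information characterization: if (D, E) is an achievable utility–privacy pair, then E ≤ Γ(D), where Γ(D) is the supremum of H(X_h | U, Z) over all D-admissible single-letter choices (p(u | x_r, x_h), g). -/
open scoped BigOperators

/-- A function `p : α → ℝ` on a finite alphabet is a probability mass function. -/
def IsPMF {α : Type} [Fintype α] (p : α → ℝ) : Prop :=
  (∀ a, 0 ≤ p a) ∧ ∑ a, p a = 1

/-- Shannon entropy (base-2) of a pmf on a finite alphabet, with the convention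
`0 · log 0 = 0` (automatic since `Real.logb 2 0 = 0`). -/
noncomputable def H2 {α : Type} [Fintype α] (p : α → ℝ) : ℝ :=
  -∑ a, p a * Real.logb 2 (p a)

/-- Conditional Shannon entropy `H(A | B)` computed from a joint pmf on `α × β`
(first coordinate the variable, second the conditioning variable):
`H(A | B) = H(A, B) - H(B)`. -/
noncomputable def condH2 {α β : Type} [Fintype α] [Fintype β] (p : α × β → ℝ) : ℝ :=
  H2 p - H2 (fun b => ∑ a, p (a, b))

/-- Mutual information `I(A ; B)` computed from a joint pmf on `α × β`:
`I(A ; B) = H(A) + H(B) - H(A, B)`. -/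
noncomputable def MI2 {α β : Type} [Fintype α] [Fintype β] (p : α × β → ℝ) : ℝ :=
  H2 (fun a => ∑ b, p (a, b)) + H2 (fun b => ∑ a, p (a, b)) - H2 p

/-- Average per-letter distortion of an `(n, M)` code. -/
noncomputable def codeDistortion {Xr Xh Z Xhat : Type}
    [Fintype Xr] [Fintype Xh] [Fintype Z] [Fintype Xhat]
    (p : Xr × Xh × Z → ℝ) (d : Xr × Xhat → ℝ) (n M : ℕ)
    (enc : (Fin n → Xr × Xh) → Fin M)
    (dec : Fin M × (Fin n → Z) → Fin n → Xhat) : ℝ :=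
  ∑ s : Fin n → Xr × Xh × Z,
    (∏ i, p (s i)) *
      ((n : ℝ)⁻¹ * ∑ i, d ((s i).1,
        dec (enc fun j => ((s j).1, (s j).2.1), fun j => (s j).2.2) i))

/-- Equivocation `(1/n) H(X_h^n | W, Z^n)` of an `(n, M)` code. -/
noncomputable def codeEquivocation {Xr Xh Z : Type}
    [Fintype Xr] [Fintype Xh] [Fintype Z]
    (p : Xr × Xh × Z → ℝ) (n M : ℕ)
    (enc : (Fin n → Xr × Xh) → Fin M) : ℝ :=
  (n : ℝ)⁻¹ * condH2 (fun q : (Fin n → Xh) × (Fin M × (Fin n → Z)) =>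
    ∑ xr : Fin n → Xr,
      if enc (fun i => (xr i, q.1 i)) = q.2.1 then ∏ i, p (xr i, q.1 i, q.2.2 i) else 0)

/-- `(D, E)` is an achievable utility–privacy pair. -/
def AchievablePair {Xr Xh Z Xhat : Type}
    [Fintype Xr] [Fintype Xh] [Fintype Z] [Fintype Xhat]
    (p : Xr × Xh × Z → ℝ) (d : Xr × Xhat → ℝ) (D E : ℝ) : Prop :=
  ∀ ε > 0, ∃ (n M : ℕ) (enc : (Fin n → Xr × Xh) → Fin M)
      (dec : Fin M × (Fin n → Z) → Fin n → Xhat),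
    0 < n ∧ 0 < M ∧
    codeDistortion p d n M enc dec ≤ D + ε ∧
    E - ε ≤ codeEquivocation p n M enc

/-- `(R, D, E)` is an achievable rate–distortion–equivocation triple. -/
def AchievableTriple {Xr Xh Z Xhat : Type}
    [Fintype Xr] [Fintype Xh] [Fintype Z] [Fintype Xhat]
    (p : Xr × Xh × Z → ℝ) (d : Xr × Xhat → ℝ) (R D E : ℝ) : Prop :=
  ∀ ε > 0, ∃ (n M : ℕ) (enc : (Fin n → Xr × Xh) → Fin M)
      (dec : Fin M × (Fin n → Z) → Fin n → Xhat),
    0 < n ∧ 0 < M ∧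
    (M : ℝ) ≤ (2 : ℝ) ^ ((n : ℝ) * (R + ε)) ∧
    codeDistortion p d n M enc dec ≤ D + ε ∧
    E - ε ≤ codeEquivocation p n M enc

/-- Single-letter expected distortion `E[d(X_r, g(U, Z))]` under the joint law
`p(x_r, x_h, z) p(u | x_r, x_h)` (so that `U — (X_r, X_h) — Z` is a Markov chain). -/
noncomputable def slDistortion {Xr Xh Z Xhat U : Type}
    [Fintype Xr] [Fintype Xh] [Fintype Z] [Fintype Xhat] [Fintype U]
    (p : Xr × Xh × Z → ℝ) (d : Xr × Xhat → ℝ)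
    (pu : Xr × Xh → U → ℝ) (g : U × Z → Xhat) : ℝ :=
  ∑ x : Xr × Xh × Z, ∑ u : U, p x * pu (x.1, x.2.1) u * d (x.1, g (u, x.2.2))

/-- Single-letter equivocation `H(X_h | U, Z)` under the joint law
`p(x_r, x_h, z) p(u | x_r, x_h)`. -/
noncomputable def slEquivocation {Xr Xh Z U : Type}
    [Fintype Xr] [Fintype Xh] [Fintype Z] [Fintype U]
    (p : Xr × Xh × Z → ℝ) (pu : Xr × Xh → U → ℝ) : ℝ :=
  condH2 (fun q : Xh × (U × Z) =>
    ∑ xr : Xr, p (xr, q.1, q.2.2) * pu (xr, q.1) q.2.1)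

/-- Single-letter rate `I(X_r, X_h ; U) - I(Z ; U)` under the joint law
`p(x_r, x_h, z) p(u | x_r, x_h)`. -/
noncomputable def slRate {Xr Xh Z U : Type}
    [Fintype Xr] [Fintype Xh] [Fintype Z] [Fintype U]
    (p : Xr × Xh × Z → ℝ) (pu : Xr × Xh → U → ℝ) : ℝ :=
  MI2 (fun q : (Xr × Xh) × U => (∑ z, p (q.1.1, q.1.2, z)) * pu q.1 q.2) -
    MI2 (fun q : Z × U => ∑ xr : Xr, ∑ xh : Xh, p (xr, xh, q.1) * pu (xr, xh) q.2)

/-- `Γ(D)`: supremum of `H(X_h | U, Z)` over all `D`-admissible single-letter choices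
`(p(u | x_r, x_h), g)`; since the auxiliary alphabet is finite it may be taken to be
`Fin k` for some `k`. -/
noncomputable def Gamma {Xr Xh Z Xhat : Type}
    [Fintype Xr] [Fintype Xh] [Fintype Z] [Fintype Xhat]
    (p : Xr × Xh × Z → ℝ) (d : Xr × Xhat → ℝ) (D : ℝ) : ℝ :=
  sSup { e : ℝ | ∃ (k : ℕ) (pu : Xr × Xh → Fin k → ℝ) (g : Fin k × Z → Xhat),
    (∀ a, IsPMF (pu a)) ∧ slDistortion p d pu g ≤ D ∧ e = slEquivocation p pu }

/-- `R(D, E)`: infimum of `I(X_r, X_h ; U) - I(Z ; U)` over all `(D, E)`-admissible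
single-letter choices `(p(u | x_r, x_h), g)`. -/
noncomputable def RDE {Xr Xh Z Xhat : Type}
    [Fintype Xr] [Fintype Xh] [Fintype Z] [Fintype Xhat]
    (p : Xr × Xh × Z → ℝ) (d : Xr × Xhat → ℝ) (D E : ℝ) : ℝ :=
  sInf { r : ℝ | ∃ (k : ℕ) (pu : Xr × Xh → Fin k → ℝ) (g : Fin k × Z → Xhat),
    (∀ a, IsPMF (pu a)) ∧ slDistortion p d pu g ≤ D ∧
    E ≤ slEquivocation p pu ∧ r = slRate p pu }

/-!
Fix a block code and let `I` be a uniform time index independent of the i.i.d. source block. The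
auxiliary letter is the Shannon strategy `U : Z → Xhat` which maps a value of the side information
at time `I` to the resulting reconstruction at time `I`, everything else in the block being fixed.
Given the source letter `(X_r, X_h)` at time `I`, it depends only on the rest of the block, hence
not on the side information at time `I`: it comes from a channel `p(u | x_r, x_h)`. Its
distortion, with `g (u, z) = u z`, is that of the code. Let `q` be the conditional law of the
hidden letter given `(U, Z)`. Gibbs' inequality, comparing the true law of the hidden block with
the product of the kernels `q`, shows that the equivocation of the code is at most
`H(X_h | U, Z)`.

Strategies form one finite alphabet whatever the block length, so all these channels lie in a
single compact set, and the slack `ε` disappears by continuity.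
-/

section Gibbs

open Real

lemma mul_logb_le_mul_logb_self_add {b x y : ℝ} (hb : 1 < b) (hx : 0 ≤ x) (hy : 0 ≤ y)
    (hxy : x ≠ 0 → y ≠ 0) : x * logb b y ≤ x * logb b x + (y - x) / log b := by
  have hlog : 0 < log b := log_pos hb
  rcases hx.eq_or_lt with rfl | hx
  · simpa using div_nonneg hy hlog.le
  have hy : 0 < y := hy.lt_of_ne' (hxy hx.ne')
  have key : x * (log y - log x) ≤ y - x :=
    calc x * (log y - log x) = x * log (y / x) := by rw [log_div hy.ne' hx.ne']
      _ ≤ x * (y / x - 1) := by gcongr; exact log_le_sub_one_of_pos (div_pos hy hx)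
      _ = y - x := by field_simp
  calc x * logb b y = x * logb b x + x * (log y - log x) / log b := by
        simp only [logb]; ring
    _ ≤ x * logb b x + (y - x) / log b := by gcongr

theorem sum_mul_logb_le_sum_mul_logb_self {ι : Type*} {s : Finset ι} {b : ℝ} {P R : ι → ℝ}
    (hb : 1 < b) (hP : ∀ i ∈ s, 0 ≤ P i) (hR : ∀ i ∈ s, 0 ≤ R i)
    (hPR : ∀ i ∈ s, P i ≠ 0 → R i ≠ 0) (hsum : ∑ i ∈ s, R i ≤ ∑ i ∈ s, P i) :
    ∑ i ∈ s, P i * logb b (R i) ≤ ∑ i ∈ s, P i * logb b (P i) :=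
  calc ∑ i ∈ s, P i * logb b (R i)
      ≤ ∑ i ∈ s, (P i * logb b (P i) + (R i - P i) / log b) :=
        Finset.sum_le_sum fun i hi =>
          mul_logb_le_mul_logb_self_add hb (hP i hi) (hR i hi) (hPR i hi)
    _ = ∑ i ∈ s, P i * logb b (P i) + (∑ i ∈ s, R i - ∑ i ∈ s, P i) / log b := by
        rw [Finset.sum_add_distrib, ← Finset.sum_div, Finset.sum_sub_distrib]
    _ ≤ ∑ i ∈ s, P i * logb b (P i) := by
        have := div_nonpos_of_nonpos_of_nonneg (sub_nonpos.2 hsum) (log_pos hb).le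
        linarith

end Gibbs

section ConditionalEntropy

open Real

variable {α β : Type} [Fintype α]

/-- The conditional probability `P(a | b) = P(a, b) / P(b)`, with value `0` where `P(b) = 0`. -/
noncomputable def condProb (P : α × β → ℝ) (x : α × β) : ℝ :=
  P x / ∑ a, P (a, x.2)

variable {P Q : α × β → ℝ}

lemma sum_fst_pos_of_ne_zero (hP : ∀ x, 0 ≤ P x) {x : α × β} (hx : P x ≠ 0) :
    0 < ∑ a, P (a, x.2) :=
  Finset.sum_pos' (fun _ _ => hP _) ⟨x.1, Finset.mem_univ _, (hP x).lt_of_ne' hx⟩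

lemma condProb_nonneg (hP : ∀ x, 0 ≤ P x) (x : α × β) : 0 ≤ condProb P x :=
  div_nonneg (hP x) (Finset.sum_nonneg fun _ _ => hP _)

lemma condProb_ne_zero (hP : ∀ x, 0 ≤ P x) {x : α × β} (hx : P x ≠ 0) : condProb P x ≠ 0 :=
  div_ne_zero hx (sum_fst_pos_of_ne_zero hP hx).ne'

lemma sum_condProb_le_one (P : α × β → ℝ) (b : β) : ∑ a, condProb P (a, b) ≤ 1 := by
  simp only [condProb, ← Finset.sum_div]
  exact div_self_le_one _

variable [Fintype β]

lemma sum_mul_logb_mul_sum_fst (hP : ∀ x, 0 ≤ P x) (hPQ : ∀ x, P x ≠ 0 → Q x ≠ 0) :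
    ∑ x, P x * logb 2 (Q x * ∑ a, P (a, x.2)) =
      ∑ x, P x * logb 2 (Q x) - H2 fun b => ∑ a, P (a, b) := by
  have hsplit : ∀ x, P x * logb 2 (Q x * ∑ a, P (a, x.2)) =
      P x * logb 2 (Q x) + P x * logb 2 (∑ a, P (a, x.2)) := by
    intro x
    by_cases hx : P x = 0
    · simp [hx]
    · rw [logb_mul (hPQ x hx) (sum_fst_pos_of_ne_zero hP hx).ne', mul_add]
  have hmarginal : ∑ x, P x * logb 2 (∑ a, P (a, x.2)) = -H2 fun b => ∑ a, P (a, b) := by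
    simp only [H2, Fintype.sum_prod_type_right, Finset.sum_mul, neg_neg]
  simp only [hsplit, Finset.sum_add_distrib, hmarginal, sub_eq_add_neg]

theorem condH2_eq_neg_sum_mul_logb_condProb (hP : ∀ x, 0 ≤ P x) :
    condH2 P = -∑ x, P x * logb 2 (condProb P x) := by
  have hself : ∀ x, P x * logb 2 (condProb P x * ∑ a, P (a, x.2)) = P x * logb 2 (P x) := by
    intro x
    by_cases hx : P x = 0
    · simp [hx]
    · rw [condProb, div_mul_cancel₀ _ (sum_fst_pos_of_ne_zero hP hx).ne']
  have := sum_mul_logb_mul_sum_fst hP fun _ => condProb_ne_zero hP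
  simp only [hself] at this
  rw [condH2, H2, this]
  ring

theorem condH2_le_neg_sum_mul_logb (hP : ∀ x, 0 ≤ P x) (hQ : ∀ x, 0 ≤ Q x)
    (hQ_sum : ∀ b, ∑ a, Q (a, b) ≤ 1) (hPQ : ∀ x, P x ≠ 0 → Q x ≠ 0) :
    condH2 P ≤ -∑ x, P x * logb 2 (Q x) := by
  have hP_sum : ∀ b, 0 ≤ ∑ a, P (a, b) := fun b => Finset.sum_nonneg fun _ _ => hP _
  have hmass : ∑ x, Q x * ∑ a, P (a, x.2) ≤ ∑ x, P x := by
    simp only [Fintype.sum_prod_type_right, ← Finset.sum_mul]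
    exact Finset.sum_le_sum fun b _ => mul_le_of_le_one_left (hP_sum b) (hQ_sum b)
  have hgibbs := sum_mul_logb_le_sum_mul_logb_self one_lt_two (fun x _ => hP x)
    (fun x _ => mul_nonneg (hQ x) (hP_sum x.2))
    (fun x _ hx => mul_ne_zero (hPQ x hx) (sum_fst_pos_of_ne_zero hP hx).ne') hmass
  rw [sum_mul_logb_mul_sum_fst hP hPQ] at hgibbs
  rw [condH2, H2]
  linarith

theorem condH2_le_sum_mul_logb_card (hP : ∀ x, 0 ≤ P x) :
    condH2 P ≤ (∑ x, P x) * logb 2 (Fintype.card α) := by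
  cases isEmpty_or_nonempty α
  · simp [condH2, H2]
  · have hcard : (Fintype.card α : ℝ) ≠ 0 := Nat.cast_ne_zero.2 Fintype.card_ne_zero
    refine (condH2_le_neg_sum_mul_logb hP (Q := fun _ => (Fintype.card α : ℝ)⁻¹)
      (fun _ => by positivity) (fun _ => by simp [hcard])
      fun _ _ => inv_ne_zero hcard).trans_eq ?_
    simp [Finset.sum_mul, logb_inv]

lemma H2_comp_equiv (e : α ≃ β) (P : β → ℝ) : H2 (fun a => P (e a)) = H2 P := by
  rw [H2, H2, e.sum_comp fun b => P b * logb 2 (P b)]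

theorem condH2_comp_equiv {γ : Type} [Fintype γ] (e : γ ≃ β) (P : α × β → ℝ) :
    condH2 (fun q : α × γ => P (q.1, e q.2)) = condH2 P :=
  congrArg₂ (· - ·) (H2_comp_equiv ((Equiv.refl α).prodCongr e) P)
    (H2_comp_equiv e fun b => ∑ a, P (a, b))

lemma continuous_H2 : Continuous (H2 : (α → ℝ) → ℝ) := by
  have : (H2 : (α → ℝ) → ℝ) = fun P => -∑ a, P a * log (P a) / log 2 := by
    funext P
    simp only [H2, logb, mul_div_assoc]
  rw [this]
  exact (continuous_finsetSum _ fun a _ =>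
    (continuous_mul_log.comp (continuous_apply a)).div_const _).neg

theorem continuous_condH2 : Continuous (condH2 : (α × β → ℝ) → ℝ) :=
  continuous_H2.sub (continuous_H2.comp (by fun_prop))

end ConditionalEntropy

section Pushforward

variable {Ω α β ι : Type*} [Fintype ι]

/-- The joint weight of an index uniform on `ι` and an independent sample point of weight `P`. -/
noncomputable def timeSharing (ι : Type*) [Fintype ι] (P : Ω → ℝ) (t : ι × Ω) : ℝ :=
  (Fintype.card ι : ℝ)⁻¹ * P t.2

variable {P : Ω → ℝ}

lemma timeSharing_nonneg (hP : ∀ ω, 0 ≤ P ω) (t : ι × Ω) : 0 ≤ timeSharing ι P t :=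
  mul_nonneg (by positivity) (hP _)

variable [Fintype Ω]

lemma sum_timeSharing_mul (P : Ω → ℝ) (G : ι × Ω → ℝ) :
    ∑ t, timeSharing ι P t * G t = (Fintype.card ι : ℝ)⁻¹ * ∑ i, ∑ ω, P ω * G (i, ω) := by
  simp only [timeSharing, Fintype.sum_prod_type, Finset.mul_sum, mul_assoc]

open Classical in
/-- The law of the random variable `X` when the sample space `Ω` carries the weight `P`. -/
noncomputable def pushforward (P : Ω → ℝ) (X : Ω → α) (a : α) : ℝ :=
  ∑ ω with X ω = a, P ω

lemma pushforward_nonneg (hP : ∀ ω, 0 ≤ P ω) (X : Ω → α) (a : α) : 0 ≤ pushforward P X a :=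
  Finset.sum_nonneg fun _ _ => hP _

lemma pushforward_apply_ne_zero (hP : ∀ ω, 0 ≤ P ω) (X : Ω → α) {ω : Ω} (hω : P ω ≠ 0) :
    pushforward P X (X ω) ≠ 0 := by
  refine (Finset.sum_pos' (f := P) (fun ω' _ => hP ω') ⟨ω, ?_, (hP ω).lt_of_ne' hω⟩).ne'
  simp

lemma exists_apply_eq_of_pushforward_ne_zero {X : Ω → α} {a : α} (ha : pushforward P X a ≠ 0) :
    ∃ ω, X ω = a ∧ P ω ≠ 0 := by
  classical
  obtain ⟨ω, hω, hPω⟩ := Finset.exists_ne_zero_of_sum_ne_zero ha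
  exact ⟨ω, by simpa using hω, hPω⟩

lemma pushforward_timeSharing (P : Ω → ℝ) (X : ι × Ω → α) (a : α) :
    pushforward (timeSharing ι P) X a =
      (Fintype.card ι : ℝ)⁻¹ * ∑ i, pushforward P (fun ω => X (i, ω)) a := by
  classical
  simpa [pushforward, Finset.sum_filter] using
    sum_timeSharing_mul P fun t : ι × Ω => if X t = a then 1 else 0

variable [Fintype α]

lemma sum_pushforward_mul (P : Ω → ℝ) (X : Ω → α) (G : α → ℝ) :
    ∑ a, pushforward P X a * G a = ∑ ω, P ω * G (X ω) := by
  classical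
  simp only [pushforward, Finset.sum_filter, Finset.sum_mul, ite_mul, zero_mul]
  rw [Finset.sum_comm]
  simp

lemma sum_pushforward (P : Ω → ℝ) (X : Ω → α) : ∑ a, pushforward P X a = ∑ ω, P ω := by
  simpa using sum_pushforward_mul P X fun _ => 1

lemma pushforward_pushforward (P : Ω → ℝ) (X : Ω → α) (Y : α → β) :
    pushforward (pushforward P X) Y = pushforward P fun ω => Y (X ω) := by
  classical
  funext b
  simpa [pushforward, Finset.sum_filter] using
    sum_pushforward_mul P X fun a => if Y a = b then 1 else 0

end Pushforward

section PMF

variable {Ω α ι : Type} [Fintype Ω] [Fintype α] [Fintype ι] {P : Ω → ℝ}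

theorem isPMF_pushforward (hP : IsPMF P) (X : Ω → α) : IsPMF (pushforward P X) :=
  ⟨pushforward_nonneg hP.1 X, (sum_pushforward P X).trans hP.2⟩

theorem isPMF_timeSharing [Nonempty ι] (hP : IsPMF P) : IsPMF (timeSharing ι P) := by
  refine ⟨timeSharing_nonneg hP.1, ?_⟩
  simpa [hP.2] using sum_timeSharing_mul (ι := ι) P fun _ => 1

end PMF

section SingleLetterization

open Real

variable {ι Ω α β γ : Type} [Fintype ι] [DecidableEq ι] [Fintype Ω]
  [Fintype α] [Fintype β] [Fintype γ]

-- Gibbs' inequality with the reference kernel `∏ i, q (x i | V i y)`, where `q` is the conditional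
-- law of the time-shared letter, covers at once the chain rule, the loss of information from
-- `Y` to `V i Y`, and the concavity of conditional entropy in the time-sharing mixture.
theorem inv_card_mul_condH2_pi_le_condH2_timeSharing {P : Ω → ℝ} (hP : ∀ ω, 0 ≤ P ω)
    (X : Ω → ι → α) (Y : Ω → β) (V : ι → β → γ) :
    (Fintype.card ι : ℝ)⁻¹ * condH2 (pushforward P fun ω => (X ω, Y ω)) ≤
      condH2 (pushforward (timeSharing ι P) fun t => (X t.2 t.1, V t.1 (Y t.2))) := by
  set L := pushforward (timeSharing ι P) fun t => (X t.2 t.1, V t.1 (Y t.2))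
  have hL : ∀ x, 0 ≤ L x := pushforward_nonneg (timeSharing_nonneg hP) _
  have hq_ne : ∀ ω i, P ω ≠ 0 → condProb L (X ω i, V i (Y ω)) ≠ 0 := fun ω i hω =>
    have : Nonempty ι := ⟨i⟩
    condProb_ne_zero hL <| pushforward_apply_ne_zero (timeSharing_nonneg hP) _ (ω := (i, ω)) <|
      mul_ne_zero (by simp) hω
  let R (x : (ι → α) × β) : ℝ := ∏ i, condProb L (x.1 i, V i x.2)
  have hR : ∀ x, 0 ≤ R x := fun x => Finset.prod_nonneg fun i _ => condProb_nonneg hL _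
  have hR_sum : ∀ y, ∑ x, R (x, y) ≤ 1 := fun y =>
    calc ∑ x, R (x, y) = ∏ i, ∑ a, condProb L (a, V i y) :=
        (Fintype.prod_sum fun i a => condProb L (a, V i y)).symm
      _ ≤ 1 := Finset.prod_le_one
        (fun i _ => Finset.sum_nonneg fun a _ => condProb_nonneg hL _)
        fun i _ => sum_condProb_le_one L _
  have hR_ne : ∀ x, pushforward P (fun ω => (X ω, Y ω)) x ≠ 0 → R x ≠ 0 := by
    intro x hx
    obtain ⟨ω, rfl, hω⟩ := exists_apply_eq_of_pushforward_ne_zero hx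
    exact Finset.prod_ne_zero_iff.2 fun i _ => hq_ne ω i hω
  have hlogR : ∀ ω, P ω * logb 2 (R (X ω, Y ω)) =
      ∑ i, P ω * logb 2 (condProb L (X ω i, V i (Y ω))) := by
    intro ω
    by_cases hω : P ω = 0
    · simp [hω]
    · rw [logb_prod _ _ fun i _ => hq_ne ω i hω, Finset.mul_sum]
  calc (Fintype.card ι : ℝ)⁻¹ * condH2 (pushforward P fun ω => (X ω, Y ω))
      ≤ (Fintype.card ι : ℝ)⁻¹ *
          -∑ x, pushforward P (fun ω => (X ω, Y ω)) x * logb 2 (R x) := by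
        gcongr
        exact condH2_le_neg_sum_mul_logb (pushforward_nonneg hP _) hR hR_sum hR_ne
    _ = -((Fintype.card ι : ℝ)⁻¹ *
          ∑ i, ∑ ω, P ω * logb 2 (condProb L (X ω i, V i (Y ω)))) := by
        rw [sum_pushforward_mul, Finset.sum_congr rfl fun ω _ => hlogR ω, Finset.sum_comm,
          mul_neg]
    _ = -∑ x, L x * logb 2 (condProb L x) := by
        rw [sum_pushforward_mul, sum_timeSharing_mul]
    _ = condH2 L := (condH2_eq_neg_sum_mul_logb_condProb hL).symm

end SingleLetterization

section IID

variable {α ι : Type*} [Fintype ι]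

/-- The law of a block of independent letters indexed by `ι`, each with law `p`. -/
def iidLaw (ι : Type*) [Fintype ι] (p : α → ℝ) (s : ι → α) : ℝ :=
  ∏ i, p (s i)

lemma sum_iidLaw [DecidableEq ι] [Fintype α] {p : α → ℝ} (hp : ∑ a, p a = 1) :
    ∑ s, iidLaw ι p s = 1 := by
  simp [iidLaw, ← Fintype.prod_sum, hp]

lemma iidLaw_update_mul [DecidableEq ι] (p : α → ℝ) (i : ι) (s : ι → α) (x : α) :
    iidLaw ι p (Function.update s i x) * p (s i) = iidLaw ι p s * p x := by
  simp only [iidLaw, ← Finset.mul_prod_erase _ _ (Finset.mem_univ i), Function.update_self]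
  rw [Finset.prod_congr rfl fun j hj => by rw [Function.update_of_ne (Finset.ne_of_mem_erase hj)]]
  ring

-- Exchanging the `i`-th letter of the block with an independent copy preserves the joint law.
theorem sum_iidLaw_mul_of_update_eq [DecidableEq ι] [Fintype α] {p : α → ℝ}
    (hp : ∑ a, p a = 1) (i : ι) {F : α → (ι → α) → ℝ}
    (hF : ∀ x s y, F x (Function.update s i y) = F x s) :
    ∑ s, iidLaw ι p s * F (s i) s = ∑ x, p x * ∑ s, iidLaw ι p s * F x s := by
  have hswap : Function.Involutive
      fun t : (ι → α) × α => (Function.update t.1 i t.2, t.1 i) := fun t => by simp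
  calc ∑ s, iidLaw ι p s * F (s i) s
      = ∑ t : (ι → α) × α, iidLaw ι p t.1 * p t.2 * F (t.1 i) t.1 := by
        simp only [Fintype.sum_prod_type, ← Finset.sum_mul, ← Finset.mul_sum, hp, mul_one]
    _ = ∑ t : (ι → α) × α, iidLaw ι p t.1 * p t.2 * F t.2 t.1 := by
        rw [← Equiv.sum_comp hswap.toPerm]
        simp [iidLaw_update_mul, hF]
    _ = ∑ x, p x * ∑ s, iidLaw ι p s * F x s := by
        simp only [Fintype.sum_prod_type_right, Finset.mul_sum]
        exact Finset.sum_congr rfl fun x _ => Finset.sum_congr rfl fun s _ => by ring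

theorem pushforward_iidLaw_prodMk [DecidableEq ι] [Fintype α] {β : Type*} {p : α → ℝ}
    (hp : ∑ a, p a = 1) (i : ι) {g : α → (ι → α) → β}
    (hg : ∀ x s y, g x (Function.update s i y) = g x s) (x : α) (u : β) :
    pushforward (iidLaw ι p) (fun s => (s i, g (s i) s)) (x, u) =
      p x * pushforward (iidLaw ι p) (g x) u := by
  classical
  have := sum_iidLaw_mul_of_update_eq hp i
    (F := fun y s => if y = x then if g y s = u then 1 else 0 else 0) (by simp [hg])
  simpa [pushforward, Finset.sum_filter, ite_and] using this

end IID

theorem isPMF_iidLaw {α ι : Type} [Fintype α] [Fintype ι] [DecidableEq ι] {p : α → ℝ}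
    (hp : IsPMF p) : IsPMF (iidLaw ι p) :=
  ⟨fun _ => Finset.prod_nonneg fun _ _ => hp.1 _, sum_iidLaw hp.2⟩

section SingleLetter

variable {Xr Xh Z Xhat U : Type}

/-- The joint law `p(x_r, x_h, z) p(u | x_r, x_h)` of a source letter and an auxiliary letter. -/
def channelJoint (p : Xr × Xh × Z → ℝ) (pu : Xr × Xh → U → ℝ) (t : (Xr × Xh × Z) × U) : ℝ :=
  p t.1 * pu (t.1.1, t.1.2.1) t.2

variable [Fintype Xr] [Fintype Xh] [Fintype Z] [Fintype U]
  {p : Xr × Xh × Z → ℝ} {pu : Xr × Xh → U → ℝ}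

theorem isPMF_channelJoint (hp : IsPMF p) (hpu : ∀ a, IsPMF (pu a)) :
    IsPMF (channelJoint p pu) := by
  refine ⟨fun t => mul_nonneg (hp.1 _) ((hpu _).1 _), ?_⟩
  simp only [channelJoint, Fintype.sum_prod_type (α₁ := Xr × Xh × Z), ← Finset.mul_sum, (hpu _).2,
    mul_one, hp.2]

lemma slEquivocation_eq_condH2_pushforward (p : Xr × Xh × Z → ℝ) (pu : Xr × Xh → U → ℝ) :
    slEquivocation p pu =
      condH2 (pushforward (channelJoint p pu) fun t => (t.1.2.1, t.2, t.1.2.2)) := by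
  classical
  rw [slEquivocation]
  congr 1
  funext ⟨xh, u, z⟩
  simp [pushforward, channelJoint, Finset.sum_filter, Fintype.sum_prod_type, ite_and]

theorem slEquivocation_le_logb_card (hp : IsPMF p) (hpu : ∀ a, IsPMF (pu a)) :
    slEquivocation p pu ≤ Real.logb 2 (Fintype.card Xh) := by
  have hlaw := isPMF_pushforward (isPMF_channelJoint hp hpu) fun t => (t.1.2.1, t.2, t.1.2.2)
  rw [slEquivocation_eq_condH2_pushforward]
  simpa [hlaw.2] using condH2_le_sum_mul_logb_card hlaw.1

lemma continuous_slEquivocation (p : Xr × Xh × Z → ℝ) :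
    Continuous fun pu : Xr × Xh → U → ℝ => slEquivocation p pu :=
  continuous_condH2.comp (by fun_prop)

lemma slEquivocation_comp_equiv {V : Type} [Fintype V] (e : V ≃ U) (p : Xr × Xh × Z → ℝ)
    (pu : Xr × Xh → U → ℝ) :
    slEquivocation p (fun a v => pu a (e v)) = slEquivocation p pu :=
  condH2_comp_equiv (e.prodCongr (Equiv.refl Z))
    fun q : Xh × (U × Z) => ∑ xr, p (xr, q.1, q.2.2) * pu (xr, q.1) q.2.1

variable [Fintype Xhat]

lemma slDistortion_eq_sum_channelJoint (p : Xr × Xh × Z → ℝ) (d : Xr × Xhat → ℝ)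
    (pu : Xr × Xh → U → ℝ) (g : U × Z → Xhat) :
    slDistortion p d pu g = ∑ t, channelJoint p pu t * d (t.1.1, g (t.2, t.1.2.2)) := by
  rw [Fintype.sum_prod_type]
  rfl

lemma continuous_slDistortion (p : Xr × Xh × Z → ℝ) (d : Xr × Xhat → ℝ) (g : U × Z → Xhat) :
    Continuous fun pu : Xr × Xh → U → ℝ => slDistortion p d pu g := by
  unfold slDistortion
  fun_prop

lemma slDistortion_comp_equiv {V : Type} [Fintype V] (e : V ≃ U) (p : Xr × Xh × Z → ℝ)
    (d : Xr × Xhat → ℝ) (pu : Xr × Xh → U → ℝ) (g : U × Z → Xhat) :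
    slDistortion p d (fun a v => pu a (e v)) (fun q => g (e q.1, q.2)) = slDistortion p d pu g :=
  Finset.sum_congr rfl fun x _ =>
    e.sum_comp fun u => p x * pu (x.1, x.2.1) u * d (x.1, g (u, x.2.2))

theorem slEquivocation_le_Gamma (hp : IsPMF p) (hpu : ∀ a, IsPMF (pu a)) {d : Xr × Xhat → ℝ}
    {D : ℝ} {g : U × Z → Xhat} (hD : slDistortion p d pu g ≤ D) :
    slEquivocation p pu ≤ Gamma p d D := by
  let e := (Fintype.equivFin U).symm
  refine le_csSup ⟨Real.logb 2 (Fintype.card Xh), ?_⟩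
    ⟨Fintype.card U, fun a k => pu a (e k), fun q => g (e q.1, q.2), fun a =>
      ⟨fun k => (hpu a).1 _, (e.sum_comp (pu a)).trans (hpu a).2⟩,
      (slDistortion_comp_equiv e p d pu g).trans_le hD, (slEquivocation_comp_equiv e p pu).symm⟩
  rintro _ ⟨k, pu', g', hpu', -, rfl⟩
  exact slEquivocation_le_logb_card hp hpu'

end SingleLetter

section BlockCode

variable {Xr Xh Z Xhat : Type} {n M : ℕ}

/-- The Shannon strategy of a code at time `i`: the reconstruction of the `i`-th letter as a
function of the `i`-th side information symbol, when the `i`-th encoder input is `a` and all other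
letters are those of `s`. Passing `a` separately makes the strategy independent of `s i`. -/
def shannonStrategy (enc : (Fin n → Xr × Xh) → Fin M) (dec : Fin M × (Fin n → Z) → Fin n → Xhat)
    (i : Fin n) (a : Xr × Xh) (s : Fin n → Xr × Xh × Z) (z : Z) : Xhat :=
  dec (enc (Function.update (fun j => ((s j).1, (s j).2.1)) i a),
    Function.update (fun j => (s j).2.2) i z) i

lemma shannonStrategy_update (enc : (Fin n → Xr × Xh) → Fin M)
    (dec : Fin M × (Fin n → Z) → Fin n → Xhat) (i : Fin n) (a : Xr × Xh)
    (s : Fin n → Xr × Xh × Z) (x : Xr × Xh × Z) :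
    shannonStrategy enc dec i a (Function.update s i x) = shannonStrategy enc dec i a s := by
  have hoff {β : Type} (f : Xr × Xh × Z → β) (b : β) :
      Function.update (fun j => f (Function.update s i x j)) i b =
        Function.update (fun j => f (s j)) i b := by
    funext j
    by_cases hj : j = i <;> simp [hj]
  funext z
  simp only [shannonStrategy, hoff (fun y => (y.1, y.2.1)), hoff fun y => y.2.2]

lemma shannonStrategy_self (enc : (Fin n → Xr × Xh) → Fin M)
    (dec : Fin M × (Fin n → Z) → Fin n → Xhat) (i : Fin n) (s : Fin n → Xr × Xh × Z) (z : Z) :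
    shannonStrategy enc dec i ((s i).1, (s i).2.1) s z =
      dec (enc fun j => ((s j).1, (s j).2.1), Function.update (fun j => (s j).2.2) i z) i := by
  rw [shannonStrategy, Function.update_eq_self i fun j => ((s j).1, (s j).2.1)]

variable [Fintype Xr] [Fintype Xh] [Fintype Z]

/-- The single-letter channel of a block code: the law of its Shannon strategy at a uniform time,
when the encoder input at that time is `a`. -/
noncomputable def strategyChannel (p : Xr × Xh × Z → ℝ) (enc : (Fin n → Xr × Xh) → Fin M)
    (dec : Fin M × (Fin n → Z) → Fin n → Xhat) (a : Xr × Xh) : (Z → Xhat) → ℝ :=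
  pushforward (timeSharing (Fin n) (iidLaw (Fin n) p)) fun t => shannonStrategy enc dec t.1 a t.2

variable {p : Xr × Xh × Z → ℝ}

lemma codeEquivocation_eq_condH2_pushforward (p : Xr × Xh × Z → ℝ)
    (enc : (Fin n → Xr × Xh) → Fin M) :
    codeEquivocation p n M enc = (n : ℝ)⁻¹ * condH2 (pushforward (iidLaw (Fin n) p) fun s =>
      (fun i => (s i).2.1, enc fun i => ((s i).1, (s i).2.1), fun i => (s i).2.2)) := by
  classical
  let e : (Fin n → Xr) × (Fin n → Xh) × (Fin n → Z) ≃ (Fin n → Xr × Xh × Z) :=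
    { toFun := fun t i => (t.1 i, t.2.1 i, t.2.2 i)
      invFun := fun s => (fun i => (s i).1, fun i => (s i).2.1, fun i => (s i).2.2)
      left_inv := fun _ => rfl
      right_inv := fun _ => rfl }
  rw [codeEquivocation]
  congr 2
  funext ⟨xh, w, z⟩
  rw [pushforward, Finset.sum_filter, ← e.sum_comp]
  simp [e, iidLaw, Fintype.sum_prod_type, ite_and]

theorem channelJoint_strategyChannel (hp : ∑ x, p x = 1) (enc : (Fin n → Xr × Xh) → Fin M)
    (dec : Fin M × (Fin n → Z) → Fin n → Xhat) :
    channelJoint p (strategyChannel p enc dec) =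
      pushforward (timeSharing (Fin n) (iidLaw (Fin n) p)) fun t =>
        (t.2 t.1, shannonStrategy enc dec t.1 ((t.2 t.1).1, (t.2 t.1).2.1) t.2) := by
  funext ⟨x, u⟩
  have hindep (i : Fin n) := pushforward_iidLaw_prodMk hp i
    (g := fun x => shannonStrategy enc dec i (x.1, x.2.1))
    (fun x s y => shannonStrategy_update enc dec i (x.1, x.2.1) s y) x u
  simp only [channelJoint, strategyChannel, pushforward_timeSharing, hindep, ← Finset.mul_sum]
  ring

variable [DecidableEq Z] [Fintype Xhat]

theorem isPMF_strategyChannel [NeZero n] (hp : IsPMF p) (enc : (Fin n → Xr × Xh) → Fin M)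
    (dec : Fin M × (Fin n → Z) → Fin n → Xhat) (a : Xr × Xh) :
    IsPMF (strategyChannel p enc dec a) :=
  isPMF_pushforward (isPMF_timeSharing (isPMF_iidLaw hp)) _

theorem slDistortion_strategyChannel (hp : ∑ x, p x = 1) (d : Xr × Xhat → ℝ)
    (enc : (Fin n → Xr × Xh) → Fin M) (dec : Fin M × (Fin n → Z) → Fin n → Xhat) :
    slDistortion p d (strategyChannel p enc dec) (fun q => q.1 q.2) =
      codeDistortion p d n M enc dec := by
  rw [slDistortion_eq_sum_channelJoint, channelJoint_strategyChannel hp, sum_pushforward_mul,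
    sum_timeSharing_mul, Finset.sum_comm, Finset.mul_sum, codeDistortion]
  refine Finset.sum_congr rfl fun s _ => ?_
  simp only [shannonStrategy_self, Function.update_eq_self, Fintype.card_fin, iidLaw,
    ← Finset.mul_sum]
  ring

theorem codeEquivocation_le_slEquivocation_strategyChannel (hp : IsPMF p)
    (enc : (Fin n → Xr × Xh) → Fin M) (dec : Fin M × (Fin n → Z) → Fin n → Xhat) :
    codeEquivocation p n M enc ≤ slEquivocation p (strategyChannel p enc dec) := by
  rw [codeEquivocation_eq_condH2_pushforward, slEquivocation_eq_condH2_pushforward,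
    channelJoint_strategyChannel hp.2, pushforward_pushforward]
  simpa only [Fintype.card_fin, shannonStrategy_self, funext (shannonStrategy_self enc dec _ _)]
    using inv_card_mul_condH2_pi_le_condH2_timeSharing (isPMF_iidLaw hp).1
      (fun s i => (s i).2.1) (fun s => (enc fun i => ((s i).1, (s i).2.1), fun i => (s i).2.2))
      fun i y => (fun z => dec (y.1, Function.update y.2 i z) i, y.2 i)

end BlockCode

lemma exists_nonpos_of_isCompact_of_forall_pos {X : Type*} [TopologicalSpace X] {K : Set X}
    (hK : IsCompact K) {f : X → ℝ} (hf : ContinuousOn f K) (h : ∀ ε > 0, ∃ x ∈ K, f x ≤ ε) :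
    ∃ x ∈ K, f x ≤ 0 := by
  obtain ⟨x₀, hx₀, -⟩ := h 1 one_pos
  obtain ⟨x, hx, hmin⟩ := hK.exists_isMinOn ⟨x₀, hx₀⟩ hf
  refine ⟨x, hx, le_of_forall_pos_le_add fun ε hε => ?_⟩
  obtain ⟨y, hy, hyε⟩ := h ε hε
  simpa using (hmin hy).trans hyε

theorem exists_shannonStrategy_channel_of_achievablePair {Xr Xh Z Xhat : Type}
    [Fintype Xr] [Fintype Xh] [Fintype Z] [DecidableEq Z] [Fintype Xhat]
    {p : Xr × Xh × Z → ℝ} (hp : IsPMF p) {d : Xr × Xhat → ℝ} {D E : ℝ}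
    (h : AchievablePair p d D E) :
    ∃ pu : Xr × Xh → (Z → Xhat) → ℝ, (∀ a, IsPMF (pu a)) ∧
      slDistortion p d pu (fun q => q.1 q.2) ≤ D ∧ E ≤ slEquivocation p pu := by
  have hcompact : IsCompact (Set.univ.pi fun _ : Xr × Xh => stdSimplex ℝ (Z → Xhat)) :=
    isCompact_univ_pi fun _ => isCompact_stdSimplex ℝ (Z → Xhat)
  have hcont : Continuous fun pu : Xr × Xh → (Z → Xhat) → ℝ =>
      max (slDistortion p d pu (fun q => q.1 q.2) - D) (E - slEquivocation p pu) :=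
    ((continuous_slDistortion p d _).sub continuous_const).max
      (continuous_const.sub (continuous_slEquivocation p))
  obtain ⟨pu, hpu, hle⟩ := exists_nonpos_of_isCompact_of_forall_pos hcompact hcont.continuousOn
    fun ε hε => by
      obtain ⟨n, M, enc, dec, hn, -, hD, hE⟩ := h ε hε
      have : NeZero n := ⟨hn.ne'⟩
      rw [← slDistortion_strategyChannel hp.2] at hD
      have hE' := hE.trans (codeEquivocation_le_slEquivocation_strategyChannel hp enc dec)
      exact ⟨strategyChannel p enc dec, fun a _ => isPMF_strategyChannel hp enc dec a,
        max_le (by linarith) (by linarith)⟩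
  exact ⟨pu, fun a => hpu a trivial, by linarith [(max_le_iff.1 hle).1],
    by linarith [(max_le_iff.1 hle).2]⟩

theorem equivocation_converse_general {Xr Xh Z Xhat : Type}
    [Fintype Xr] [Fintype Xh] [Fintype Z] [Fintype Xhat]
    (p : Xr × Xh × Z → ℝ) (hp : IsPMF p) (d : Xr × Xhat → ℝ)
    (D E : ℝ) (h : AchievablePair p d D E) :
    E ≤ Gamma p d D := by
  classical
  obtain ⟨pu, hpu, hD, hE⟩ := exists_shannonStrategy_channel_of_achievablePair hp h
  exact hE.trans (slEquivocation_le_Gamma hp hpu hD)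

/-- Equivocation converse of the side-information characterization: if `(D, E)` is an
achievable utility–privacy pair, then `E ≤ Γ(D)`, where `Γ(D)` is the supremum of
`H(X_h | U, Z)` over all `D`-admissible single-letter choices `(p(u | x_r, x_h), g)`. -/
theorem equivocation_converse {Xr Xh Z Xhat : Type}
    [Fintype Xr] [Fintype Xh] [Fintype Z] [Fintype Xhat]
    [Nonempty Xr] [Nonempty Xh] [Nonempty Z] [Nonempty Xhat]
    (p : Xr × Xh × Z → ℝ) (hp : IsPMF p)
    (d : Xr × Xhat → ℝ) (hd : ∀ a, 0 ≤ d a)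
    (D E : ℝ) (h : AchievablePair p d D E) :
    E ≤ Gamma p d D :=
  equivocation_converse_general p hp d D E h
end

section
/- The Laplace mechanism guarantees ε-differential privacy: let ε > 0 and Δ > 0, and for a ∈ ℝ let μ_a denote the probability measure on ℝ with density z ↦ (ε / (2Δ)) · exp(−ε |z − a| / Δ) with respect to Lebesgue measure (the output distribution of the mechanism that adds Lap(Δ/ε) noise to a query answer a). Then for all a, b ∈ ℝ with |a − b| ≤ Δ and every Borel set S ⊆ ℝ, μ_a(S) ≤ exp(ε) · μ_b(S). -/
open MeasureTheory

/-- The output distribution of the Laplace mechanism on query answer `a`: the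
probability measure on `ℝ` with Lebesgue density
`z ↦ (ε / (2Δ)) · exp(-ε |z - a| / Δ)`, i.e. `a` plus `Lap(Δ/ε)` noise. -/
noncomputable def laplaceMechanism (ε Δ a : ℝ) : Measure ℝ :=
  volume.withDensity fun z => ENNReal.ofReal (ε / (2 * Δ) * Real.exp (-(ε * |z - a|) / Δ))

theorem withDensity_le_smul_withDensity {α : Type*} [MeasurableSpace α] {μ : Measure α}
    {f g : α → ENNReal} {c : ENNReal} (hc : c ≠ ⊤) (hfg : ∀ᵐ x ∂μ, f x ≤ c * g x) :
    μ.withDensity f ≤ c • μ.withDensity g :=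
  (withDensity_mono hfg).trans_eq (withDensity_smul' c g hc)

theorem exp_neg_mul_dist_le {X : Type*} [PseudoMetricSpace X] {k : ℝ} (hk : 0 ≤ k) (x y z : X) :
    Real.exp (-(k * dist z x)) ≤ Real.exp (k * dist x y) * Real.exp (-(k * dist z y)) := by
  rw [← Real.exp_add, Real.exp_le_exp]
  have triangle : k * dist z y ≤ k * (dist z x + dist x y) := by
    gcongr
    exact dist_triangle z x y
  linarith

theorem laplace_density_le {ε Δ : ℝ} (hε : 0 ≤ ε) (hΔ : 0 ≤ Δ) (a b z : ℝ) :
    ε / (2 * Δ) * Real.exp (-(ε * |z - a|) / Δ) ≤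
      Real.exp (ε * (|a - b| / Δ)) * (ε / (2 * Δ) * Real.exp (-(ε * |z - b|) / Δ)) := by
  have exponent_eq (c : ℝ) : -(ε * |z - c|) / Δ = -(ε / Δ * dist z c) := by
    rw [Real.dist_eq]
    ring
  have loss_eq : ε * (|a - b| / Δ) = ε / Δ * dist a b := by
    rw [Real.dist_eq]
    ring
  rw [exponent_eq, exponent_eq, loss_eq, mul_left_comm]
  gcongr
  exact exp_neg_mul_dist_le (by positivity) a b z

theorem laplaceMechanism_differential_privacy_general {ε Δ : ℝ} (hε : 0 < ε) (hΔ : 0 < Δ)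
    (a b : ℝ) :
    laplaceMechanism ε Δ a ≤
      ENNReal.ofReal (Real.exp (ε * (|a - b| / Δ))) • laplaceMechanism ε Δ b := by
  refine withDensity_le_smul_withDensity ENNReal.ofReal_ne_top (.of_forall fun z => ?_)
  rw [← ENNReal.ofReal_mul (Real.exp_nonneg _)]
  exact ENNReal.ofReal_le_ofReal (laplace_density_le hε.le hΔ.le a b z)

/-- The Laplace mechanism guarantees `ε`-differential privacy: for `ε > 0`, `Δ > 0`,
any query answers `a, b` with `|a - b| ≤ Δ` (Δ being the global sensitivity), and every
Borel set `S ⊆ ℝ`, `μ_a(S) ≤ exp(ε) · μ_b(S)`. -/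
theorem laplaceMechanism_differential_privacy
    (ε Δ : ℝ) (hε : 0 < ε) (hΔ : 0 < Δ)
    (a b : ℝ) (hab : |a - b| ≤ Δ)
    (S : Set ℝ) (hS : MeasurableSet S) :
    laplaceMechanism ε Δ a S ≤ ENNReal.ofReal (Real.exp ε) * laplaceMechanism ε Δ b S := by
  have loss_le : ε * (|a - b| / Δ) ≤ ε :=
    mul_le_of_le_one_right hε.le (div_le_one_of_le₀ hab hΔ.le)
  exact (laplaceMechanism_differential_privacy_general hε hΔ a b S).trans <|
    mul_le_mul_left (ENNReal.ofReal_le_ofReal (Real.exp_le_exp.2 loss_le)) _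
end

section
/- Single-letterization of the rate (Wyner–Ziv-type converse step): let (X_{r,i}, X_{h,i}, Z_i), 1 ≤ i ≤ n, be i.i.d. triples of finite-valued random variables, and let W be a function of (X_r^n, X_h^n) taking at most M values. Then log₂ M ≥ Σ_{i=1}^n [ I(X_{r,i}, X_{h,i} ; U_i) − I(Z_i ; U_i) ], where U_i = (W, Z_1, …, Z_{i−1}, Z_{i+1}, …, Z_n). -/
open scoped BigOperators

/-- Joint pmf of `((X_{r,i}, X_{h,i}), U_i)` where
`U_i = (W, Z_1, …, Z_{i-1}, Z_{i+1}, …, Z_n)`, the triples `(X_{r,j}, X_{h,j}, Z_j)` are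
i.i.d. with common pmf `p` and `W = F(X_r^n, X_h^n)` takes values in `Fin M`. -/
noncomputable def jointSourceAux {Xr Xh Z : Type}
    [Fintype Xr] [Fintype Xh] [Fintype Z] [DecidableEq Xr] [DecidableEq Xh]
    (p : Xr × Xh × Z → ℝ) (n M : ℕ) (F : (Fin n → Xr × Xh) → Fin M) (i : Fin n) :
    (Xr × Xh) × (Fin M × ({j : Fin n // j ≠ i} → Z)) → ℝ :=
  fun q => ∑ xr : Fin n → Xr, ∑ xh : Fin n → Xh, ∑ zi : Z,
    if xr i = q.1.1 ∧ xh i = q.1.2 ∧ F (fun j => (xr j, xh j)) = q.2.1 then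
      ∏ j, p (xr j, xh j, if h : j = i then zi else q.2.2 ⟨j, h⟩)
    else 0

/-- Joint pmf of `(Z_i, U_i)` where `U_i = (W, Z_1, …, Z_{i-1}, Z_{i+1}, …, Z_n)`, the
triples `(X_{r,j}, X_{h,j}, Z_j)` are i.i.d. with common pmf `p` and
`W = F(X_r^n, X_h^n)` takes values in `Fin M`. -/
noncomputable def jointSideAux {Xr Xh Z : Type}
    [Fintype Xr] [Fintype Xh] [Fintype Z]
    (p : Xr × Xh × Z → ℝ) (n M : ℕ) (F : (Fin n → Xr × Xh) → Fin M) (i : Fin n) :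
    Z × (Fin M × ({j : Fin n // j ≠ i} → Z)) → ℝ :=
  fun q => ∑ xr : Fin n → Xr, ∑ xh : Fin n → Xh,
    if F (fun j => (xr j, xh j)) = q.2.1 then
      ∏ j, p (xr j, xh j, if h : j = i then q.1 else q.2.2 ⟨j, h⟩)
    else 0

/-!
Write `U_i = (W, (Z_j)_{j ≠ i})`. As `U_i` is a function of `X_i` and of the pairs `(X_j, Z_j)`,
`j ≠ i`, the triple `Z_i — X_i — U_i` is a Markov chain, so `I(X_i; U_i) - I(Z_i; U_i)` equals
`I(X_i; U_i | Z_i) = H(X_i | Z_i) - H(X_i | W, Zⁿ)`. Summing over `i`, independence turns the first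
terms into `H(Xⁿ | Zⁿ)` and subadditivity bounds the second ones below by `H(Xⁿ | W, Zⁿ)`. Since
`W` is a function of `Xⁿ`, the difference is `H(W | Zⁿ) ≤ log₂ M`. Both entropy inequalities are
instances of Gibbs' inequality.
-/

section Law

variable {Ω α β : Type} [Fintype Ω] {P : Ω → ℝ}

lemma IsPMF.nonempty (hP : IsPMF P) : Nonempty Ω := by
  by_contra hΩ
  rw [not_nonempty_iff] at hΩ
  simpa using hP.2

open Classical in
/-- The law of the random variable `f` on the finite space `Ω` whose points `ω` have weight
`P ω`, as a weight function on the codomain of `f`. -/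
noncomputable def law (P : Ω → ℝ) (f : Ω → α) (a : α) : ℝ :=
  ∑ ω with f ω = a, P ω

lemma law_eq_sum_ite [DecidableEq α] (f : Ω → α) (a : α) :
    law P f a = ∑ ω, if f ω = a then P ω else 0 := by
  rw [law, Finset.sum_filter]
  congr!

lemma law_nonneg (hP : ∀ ω, 0 ≤ P ω) (f : Ω → α) (a : α) : 0 ≤ law P f a :=
  Finset.sum_nonneg fun ω _ => hP ω

lemma law_apply_pos (hP : ∀ ω, 0 ≤ P ω) (f : Ω → α) {ω : Ω} (hω : 0 < P ω) :
    0 < law P f (f ω) :=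
  Finset.sum_pos' (fun ω' _ => hP ω') ⟨ω, by simp, hω⟩

lemma exists_pos_of_law_pos {f : Ω → α} {a : α} (ha : 0 < law P f a) :
    ∃ ω, f ω = a ∧ 0 < P ω := by
  classical
  by_contra! h
  exact ha.not_ge (Finset.sum_nonpos fun ω hω => h ω (by simpa using hω))

lemma sum_law_mul [Fintype α] (P : Ω → ℝ) (f : Ω → α) (φ : α → ℝ) :
    ∑ a, law P f a * φ a = ∑ ω, P ω * φ (f ω) := by
  classical
  rw [← Finset.sum_fiberwise Finset.univ f]
  refine Finset.sum_congr rfl fun a _ => ?_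
  rw [law, Finset.sum_mul]
  refine Finset.sum_congr (by congr!) fun ω hω => ?_
  rw [(Finset.mem_filter.mp hω).2]

lemma sum_law [Fintype α] (P : Ω → ℝ) (f : Ω → α) : ∑ a, law P f a = ∑ ω, P ω := by
  simpa using sum_law_mul P f fun _ => 1

lemma IsPMF.law [Fintype α] (hP : IsPMF P) (f : Ω → α) : IsPMF (law P f) :=
  ⟨law_nonneg hP.1 f, (sum_law P f).trans hP.2⟩

lemma law_comp [Fintype α] (P : Ω → ℝ) (f : Ω → α) (g : α → β) :
    law P (fun ω => g (f ω)) = law (law P f) g := by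
  classical
  ext b
  simpa [law_eq_sum_ite] using (sum_law_mul P f fun a => if g a = b then 1 else 0).symm

lemma law_comp_equiv {Ω' : Type} [Fintype Ω'] (P : Ω → ℝ) (e : Ω' ≃ Ω) (f : Ω → α) :
    law (fun ω => P (e ω)) (fun ω => f (e ω)) = law P f := by
  classical
  ext a
  simpa only [law_eq_sum_ite] using e.sum_comp fun ω => if f ω = a then P ω else 0

lemma sum_law_prodMk_left [Fintype α] (P : Ω → ℝ) (f : Ω → α) (g : Ω → β) (b : β) :
    ∑ a, law P (fun ω => (f ω, g ω)) (a, b) = law P g b := by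
  classical
  simp only [law_eq_sum_ite, Prod.mk.injEq]
  rw [Finset.sum_comm]
  simp [ite_and]

lemma sum_law_prodMk_right [Fintype β] (P : Ω → ℝ) (f : Ω → α) (g : Ω → β) (a : α) :
    ∑ b, law P (fun ω => (f ω, g ω)) (a, b) = law P f a := by
  classical
  simp only [law_eq_sum_ite, Prod.mk.injEq]
  rw [Finset.sum_comm]
  simp [ite_and]

end Law

section Entropy

variable {Ω α β γ : Type} [Fintype Ω] [Fintype α] [Fintype β] [Fintype γ] {P : Ω → ℝ}

/-- The Shannon entropy `H(f)`, in bits, of a random variable `f` on the weighted space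
`(Ω, P)`. -/
noncomputable def entropy (P : Ω → ℝ) (f : Ω → α) : ℝ :=
  H2 (law P f)

/-- The conditional Shannon entropy `H(f | g) = H(f, g) - H(g)`, in bits. -/
noncomputable def condEntropy (P : Ω → ℝ) (f : Ω → α) (g : Ω → β) : ℝ :=
  entropy P (fun ω => (f ω, g ω)) - entropy P g

lemma entropy_eq_neg_sum (P : Ω → ℝ) (f : Ω → α) :
    entropy P f = -∑ ω, P ω * Real.logb 2 (law P f (f ω)) := by
  rw [entropy, H2, sum_law_mul P f fun a => Real.logb 2 (law P f a)]

lemma entropy_congr {f : Ω → α} {g : Ω → β} (h : ∀ ω ω', f ω = f ω' ↔ g ω = g ω') :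
    entropy P f = entropy P g := by
  have hlaw : ∀ ω, law P f (f ω) = law P g (g ω) := fun ω => by
    unfold law
    congr! 2
    exact h _ _
  simp only [entropy_eq_neg_sum, hlaw]

lemma entropy_comp (P : Ω → ℝ) (f : Ω → α) (g : α → β) :
    entropy P (fun ω => g (f ω)) = entropy (law P f) g := by
  rw [entropy, law_comp, entropy]

lemma MI2_law_prodMk (P : Ω → ℝ) (f : Ω → α) (g : Ω → β) :
    MI2 (law P fun ω => (f ω, g ω)) =
      entropy P f + entropy P g - entropy P (fun ω => (f ω, g ω)) := by
  simp only [MI2, sum_law_prodMk_left, sum_law_prodMk_right, entropy]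

lemma condEntropy_congr_right {δ : Type} [Fintype δ] (f : Ω → α) {g : Ω → β} {h : Ω → δ}
    (hgh : ∀ ω ω', g ω = g ω' ↔ h ω = h ω') : condEntropy P f g = condEntropy P f h := by
  rw [condEntropy, condEntropy, entropy_congr hgh,
    entropy_congr (f := fun ω => (f ω, g ω)) (g := fun ω => (f ω, h ω)) (by simp [hgh])]

lemma condEntropy_sub_condEntropy_prodMk_comp (P : Ω → ℝ) (f : Ω → α) (g : Ω → β)
    (k : α → γ) :
    condEntropy P f g - condEntropy P f (fun ω => (k (f ω), g ω)) =
      condEntropy P (fun ω => k (f ω)) g := by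
  have hjoint : entropy P (fun ω => (f ω, k (f ω), g ω)) = entropy P fun ω => (f ω, g ω) :=
    entropy_congr fun ω ω' => by
      simp only [Prod.mk.injEq]
      exact ⟨fun h => ⟨h.1, h.2.2⟩, fun h => ⟨h.1, congrArg k h.1, h.2⟩⟩
  simp only [condEntropy, hjoint]
  ring

end Entropy

section Gibbs

variable {Ω α β : Type} [Fintype Ω] [Fintype α] [Fintype β] {P : Ω → ℝ}

lemma mul_logb_le_mul_logb_add {p q : ℝ} (hp : 0 ≤ p) (hq : 0 ≤ q) (hpq : 0 < p → 0 < q) :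
    p * Real.logb 2 q ≤ p * Real.logb 2 p + (q - p) / Real.log 2 := by
  have hlog2 : 0 < Real.log 2 := Real.log_pos one_lt_two
  rcases hp.eq_or_lt with rfl | hp
  · simpa using div_nonneg hq hlog2.le
  have hlog : Real.log q - Real.log p ≤ q / p - 1 := by
    rw [← Real.log_div (hpq hp).ne' hp.ne']
    exact Real.log_le_sub_one_of_pos (div_pos (hpq hp) hp)
  have hscaled : p * Real.log q ≤ p * Real.log p + (q - p) := by
    have hcancel : p * (q / p - 1) = q - p := by field_simp
    linarith [mul_le_mul_of_nonneg_left hlog hp.le]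
  simpa only [Real.logb, mul_div_assoc, add_div] using
    div_le_div_of_nonneg_right hscaled hlog2.le

lemma H2_le_neg_sum_mul_logb {p q : α → ℝ} (hp : ∀ a, 0 ≤ p a) (hq : ∀ a, 0 ≤ q a)
    (hsum : ∑ a, q a ≤ ∑ a, p a) (hpq : ∀ a, 0 < p a → 0 < q a) :
    H2 p ≤ -∑ a, p a * Real.logb 2 (q a) := by
  refine neg_le_neg ?_
  calc ∑ a, p a * Real.logb 2 (q a)
      ≤ ∑ a, (p a * Real.logb 2 (p a) + (q a - p a) / Real.log 2) :=
        Finset.sum_le_sum fun a _ => mul_logb_le_mul_logb_add (hp a) (hq a) (hpq a)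
    _ = ∑ a, p a * Real.logb 2 (p a) + (∑ a, q a - ∑ a, p a) / Real.log 2 := by
        rw [Finset.sum_add_distrib, ← Finset.sum_div, Finset.sum_sub_distrib]
    _ ≤ ∑ a, p a * Real.logb 2 (p a) :=
        add_le_of_nonpos_right <|
          div_nonpos_of_nonpos_of_nonneg (sub_nonpos.mpr hsum) (Real.log_pos one_lt_two).le

lemma entropy_le_neg_sum_mul_logb (hP : ∀ ω, 0 ≤ P ω) (f : Ω → α) {q : α → ℝ}
    (hq : ∀ a, 0 ≤ q a) (hsum : ∑ a, q a ≤ ∑ ω, P ω) (hpos : ∀ ω, 0 < P ω → 0 < q (f ω)) :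
    entropy P f ≤ -∑ ω, P ω * Real.logb 2 (q (f ω)) := by
  rw [← sum_law_mul P f fun a => Real.logb 2 (q a)]
  refine H2_le_neg_sum_mul_logb (law_nonneg hP f) hq (hsum.trans_eq (sum_law P f).symm) ?_
  intro a ha
  obtain ⟨ω, rfl, hω⟩ := exists_pos_of_law_pos ha
  exact hpos ω hω

lemma condEntropy_le_logb_card (hP : IsPMF P) (f : Ω → α) (g : Ω → β) :
    condEntropy P f g ≤ Real.logb 2 (Fintype.card α) := by
  have : Nonempty α := hP.nonempty.map f
  have hcard : (0 : ℝ) < Fintype.card α := Nat.cast_pos.mpr Fintype.card_pos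
  have hgibbs := entropy_le_neg_sum_mul_logb hP.1 (fun ω => (f ω, g ω))
    (q := fun x => law P g x.2 / Fintype.card α)
    (fun x => div_nonneg (law_nonneg hP.1 g x.2) hcard.le)
    (by simp [Fintype.sum_prod_type, ← Finset.sum_div, sum_law, hcard.ne'])
    (fun ω hω => div_pos (law_apply_pos hP.1 g hω) hcard)
  have hsplit : ∀ ω, P ω * Real.logb 2 (law P g (g ω) / Fintype.card α) =
      P ω * Real.logb 2 (law P g (g ω)) - P ω * Real.logb 2 (Fintype.card α) := by
    intro ω
    rcases (hP.1 ω).eq_or_lt with hω | hω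
    · simp [← hω]
    · rw [Real.logb_div (law_apply_pos hP.1 g hω).ne' hcard.ne', mul_sub]
  simp only [hsplit, Finset.sum_sub_distrib, ← Finset.sum_mul, hP.2, one_mul] at hgibbs
  rw [condEntropy, entropy_eq_neg_sum P g]
  linarith

end Gibbs

section ConditionalIndependence

variable {Ω β ι : Type} [Fintype Ω] [Fintype ι] {κ : ι → Type} {P : Ω → ℝ}

/-- The joint weight that makes the `f i` conditionally independent given `g` while keeping the
law of each pair `(f i, g)`: the competitor of the joint law in Gibbs' inequality. Where the law
of `g` vanishes, the leading factor makes the value of the quotients irrelevant. -/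
noncomputable def condIndepWeight (P : Ω → ℝ) (f : ∀ i, Ω → κ i) (g : Ω → β)
    (x : (∀ i, κ i) × β) : ℝ :=
  law P g x.2 * ∏ i, (law P (fun ω => (f i ω, g ω)) (x.1 i, x.2) / law P g x.2)

lemma condIndepWeight_nonneg (hP : ∀ ω, 0 ≤ P ω) (f : ∀ i, Ω → κ i) (g : Ω → β)
    (x : (∀ i, κ i) × β) : 0 ≤ condIndepWeight P f g x :=
  mul_nonneg (law_nonneg hP _ _) <|
    Finset.prod_nonneg fun _ _ => div_nonneg (law_nonneg hP _ _) (law_nonneg hP _ _)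

lemma sum_condIndepWeight_le [DecidableEq ι] [∀ i, Fintype (κ i)] [Fintype β]
    (hP : ∀ ω, 0 ≤ P ω) (f : ∀ i, Ω → κ i) (g : Ω → β) :
    ∑ x, condIndepWeight P f g x ≤ ∑ ω, P ω := by
  rw [Fintype.sum_prod_type, Finset.sum_comm, ← sum_law P g]
  refine Finset.sum_le_sum fun b _ => ?_
  simp only [condIndepWeight, ← Finset.mul_sum]
  refine mul_le_of_le_one_right (law_nonneg hP g b) ?_
  have hfactor : ∑ x : ∀ i, κ i, ∏ i, (law P (fun ω => (f i ω, g ω)) (x i, b) / law P g b) =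
      ∏ _i : ι, (law P g b / law P g b) := by
    rw [← Fintype.piFinset_univ, ← Finset.prod_univ_sum (fun _ => Finset.univ)
      fun i a => law P (fun ω => (f i ω, g ω)) (a, b) / law P g b]
    simp only [← Finset.sum_div, sum_law_prodMk_left]
  rw [hfactor]
  exact Finset.prod_le_one (fun _ _ => div_nonneg (law_nonneg hP g b) (law_nonneg hP g b))
    fun _ _ => div_self_le_one _

lemma condIndepWeight_apply_pos (hP : ∀ ω, 0 ≤ P ω) (f : ∀ i, Ω → κ i) (g : Ω → β) {ω : Ω}
    (hω : 0 < P ω) : 0 < condIndepWeight P f g (fun i => f i ω, g ω) :=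
  mul_pos (law_apply_pos hP g hω) <| Finset.prod_pos fun i _ =>
    div_pos (law_apply_pos hP (fun ω => (f i ω, g ω)) hω) (law_apply_pos hP g hω)

lemma logb_condIndepWeight (hP : ∀ ω, 0 ≤ P ω) (f : ∀ i, Ω → κ i) (g : Ω → β) {ω : Ω}
    (hω : 0 < P ω) :
    Real.logb 2 (condIndepWeight P f g (fun i => f i ω, g ω)) = Real.logb 2 (law P g (g ω)) +
      ∑ i, (Real.logb 2 (law P (fun ω => (f i ω, g ω)) (f i ω, g ω)) -
        Real.logb 2 (law P g (g ω))) := by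
  have hg := (law_apply_pos hP g hω).ne'
  have hfg := fun i => (law_apply_pos hP (fun ω => (f i ω, g ω)) hω).ne'
  rw [condIndepWeight, Real.logb_mul hg (Finset.prod_ne_zero_iff.mpr fun i _ =>
    div_ne_zero (hfg i) hg), Real.logb_prod _ _ fun i _ => div_ne_zero (hfg i) hg]
  simp only [Real.logb_div (hfg _) hg]

theorem condEntropy_pi_le_sum [DecidableEq ι] [∀ i, Fintype (κ i)] [Fintype β]
    (hP : ∀ ω, 0 ≤ P ω) (f : ∀ i, Ω → κ i) (g : Ω → β) :
    condEntropy P (fun ω i => f i ω) g ≤ ∑ i, condEntropy P (f i) g := by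
  have hgibbs := entropy_le_neg_sum_mul_logb hP (fun ω => ((fun i => f i ω), g ω))
    (condIndepWeight_nonneg hP f g) (sum_condIndepWeight_le hP f g)
    (fun ω => condIndepWeight_apply_pos hP f g)
  have hsplit : ∀ ω, P ω * Real.logb 2 (condIndepWeight P f g (fun i => f i ω, g ω)) =
      P ω * Real.logb 2 (law P g (g ω)) +
        ∑ i, (P ω * Real.logb 2 (law P (fun ω => (f i ω, g ω)) (f i ω, g ω)) -
          P ω * Real.logb 2 (law P g (g ω))) := by
    intro ω
    rcases (hP ω).eq_or_lt with hω | hω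
    · simp [← hω]
    · simp only [logb_condIndepWeight hP f g hω, mul_add, Finset.mul_sum, mul_sub]
  simp only [hsplit, Finset.sum_add_distrib] at hgibbs
  rw [Finset.sum_comm] at hgibbs
  simp only [condEntropy, entropy_eq_neg_sum, Finset.sum_sub_distrib,
    Finset.sum_neg_distrib] at hgibbs ⊢
  linarith

end ConditionalIndependence

section Markov

variable {Ω α β γ : Type} [Fintype Ω] {P : Ω → ℝ} {f : Ω → α} {g : Ω → β} {h : Ω → γ}

/-- `f — g — h` is a Markov chain: `f` and `h` are conditionally independent given `g`. The
condition `P(a, c | b) = P(a | b) P(c | b)` is stated with denominators cleared. -/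
def IsMarkovChain (P : Ω → ℝ) (f : Ω → α) (g : Ω → β) (h : Ω → γ) : Prop :=
  ∀ a b c, law P (fun ω => (f ω, g ω, h ω)) (a, b, c) * law P g b =
    law P (fun ω => (f ω, g ω)) (a, b) * law P (fun ω => (g ω, h ω)) (b, c)

lemma IsMarkovChain.of_law_eq_mul [Finite α] [Finite γ] (k : α → β → ℝ) (l : β → γ → ℝ)
    (hkl : ∀ a b c, law P (fun ω => (f ω, g ω, h ω)) (a, b, c) = k a b * l b c) :
    IsMarkovChain P f g h := by
  have := Fintype.ofFinite α
  have := Fintype.ofFinite γ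
  have hgh : ∀ b c, law P (fun ω => (g ω, h ω)) (b, c) = (∑ a, k a b) * l b c := by
    intro b c
    rw [← sum_law_prodMk_left P f, Finset.sum_mul]
    exact Finset.sum_congr rfl fun a _ => hkl a b c
  have hg : ∀ b, law P g b = (∑ a, k a b) * ∑ c, l b c := by
    intro b
    rw [← sum_law_prodMk_right P g h b, Finset.mul_sum]
    exact Finset.sum_congr rfl fun c _ => hgh b c
  have hfg : ∀ a b, law P (fun ω => (f ω, g ω)) (a, b) = k a b * ∑ c, l b c := by
    intro a b
    rw [← sum_law_prodMk_right P (fun ω => (f ω, g ω)) h (a, b), Finset.mul_sum]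
    refine Finset.sum_congr rfl fun c _ => ?_
    rw [← hkl]
    unfold law
    congr! 2
    simp only [Prod.mk.injEq, and_assoc]
  intro a b c
  rw [hkl, hg, hfg, hgh]
  ring

lemma IsMarkovChain.entropy_add_entropy [Fintype α] [Fintype β] [Fintype γ]
    (hM : IsMarkovChain P f g h) (hP : ∀ ω, 0 ≤ P ω) :
    entropy P (fun ω => (f ω, g ω, h ω)) + entropy P g =
      entropy P (fun ω => (f ω, g ω)) + entropy P (fun ω => (g ω, h ω)) := by
  simp only [entropy_eq_neg_sum, ← neg_add, ← Finset.sum_add_distrib, ← mul_add]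
  congr 1
  refine Finset.sum_congr rfl fun ω _ => ?_
  rcases (hP ω).eq_or_lt with hω | hω
  · simp [← hω]
  have hfgh := law_apply_pos hP (fun ω => (f ω, g ω, h ω)) hω
  have hfg := law_apply_pos hP (fun ω => (f ω, g ω)) hω
  have hgh := law_apply_pos hP (fun ω => (g ω, h ω)) hω
  rw [← Real.logb_mul hfgh.ne' (law_apply_pos hP g hω).ne', hM,
    Real.logb_mul hfg.ne' hgh.ne']

/-- Both sides are `I(g ; h | f)`. -/
theorem IsMarkovChain.MI2_sub_MI2 [Fintype α] [Fintype β] [Fintype γ]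
    (hM : IsMarkovChain P f g h) (hP : ∀ ω, 0 ≤ P ω) :
    MI2 (law P fun ω => (g ω, h ω)) - MI2 (law P fun ω => (f ω, h ω)) =
      condEntropy P g f - condEntropy P g (fun ω => (f ω, h ω)) := by
  have hgf : entropy P (fun ω => (g ω, f ω)) = entropy P fun ω => (f ω, g ω) :=
    entropy_congr fun ω ω' => by simp only [Prod.mk.injEq, and_comm]
  have hgfh : entropy P (fun ω => (g ω, f ω, h ω)) = entropy P fun ω => (f ω, g ω, h ω) :=
    entropy_congr fun ω ω' => by simp only [Prod.mk.injEq, and_left_comm]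
  have hmarkov := hM.entropy_add_entropy hP
  rw [MI2_law_prodMk, MI2_law_prodMk, condEntropy, condEntropy, hgf, hgfh]
  linarith

end Markov

section Independent

variable {ι : Type} [Fintype ι] {Y : ι → Type} [∀ i, Fintype (Y i)] {p : ∀ i, Y i → ℝ}

/-- The weight of a family of independent coordinates, the `i`-th one with weight `p i`. -/
def piWeight (p : ∀ i, Y i → ℝ) (y : ∀ i, Y i) : ℝ :=
  ∏ i, p i (y i)

variable [DecidableEq ι]

lemma sum_piWeight (p : ∀ i, Y i → ℝ) : ∑ y, piWeight p y = ∏ i, ∑ a, p i a := by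
  rw [Finset.prod_univ_sum, Fintype.piFinset_univ]
  rfl

lemma IsPMF.piWeight (hp : ∀ i, IsPMF (p i)) : IsPMF (piWeight p) :=
  ⟨fun _ => Finset.prod_nonneg fun i _ => (hp i).1 _, by
    rw [sum_piWeight, Finset.prod_eq_one fun i _ => (hp i).2]⟩

lemma law_piWeight_map {α : ι → Type} (p : ∀ i, Y i → ℝ) (f : ∀ i, Y i → α i) :
    law (piWeight p) (fun y i => f i (y i)) = piWeight fun i => law (p i) (f i) := by
  classical
  ext a
  simp only [piWeight, law, Finset.prod_univ_sum]
  refine Finset.sum_congr ?_ fun _ _ => rfl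
  ext y
  simp [funext_iff]

lemma law_piWeight_splitAt {α : Type} (p : ∀ i, Y i → ℝ) (i : ι)
    (f : Y i → (∀ j : {j // j ≠ i}, Y j) → α) :
    law (piWeight p) (fun y => f (y i) fun j => y j) =
      law (fun x : Y i × (∀ j : {j // j ≠ i}, Y j) =>
        p i x.1 * piWeight (fun j : {j // j ≠ i} => p j) x.2) fun x => f x.1 x.2 := by
  rw [← law_comp_equiv _ (Equiv.piSplitAt i Y)]
  congr 1
  ext y
  exact Fintype.prod_eq_mul_prod_subtype_ne (fun j => p j (y j)) i

lemma law_piWeight_eval (hp : ∀ i, IsPMF (p i)) (i : ι) :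
    law (piWeight p) (fun y => y i) = p i := by
  classical
  ext a
  rw [law_piWeight_splitAt p i fun y _ => y, law_eq_sum_ite, Fintype.sum_prod_type]
  have hrest := (IsPMF.piWeight fun j : {j // j ≠ i} => hp j).2
  simp [Finset.sum_ite_irrel, ← Finset.mul_sum, hrest]

lemma H2_piWeight (hp : ∀ i, IsPMF (p i)) : H2 (piWeight p) = ∑ i, H2 (p i) := by
  have hlog : ∀ y, piWeight p y * Real.logb 2 (piWeight p y) =
      ∑ i, piWeight p y * Real.logb 2 (p i (y i)) := by
    intro y
    by_cases hy : piWeight p y = 0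
    · simp [hy]
    · rw [← Finset.mul_sum,
        ← Real.logb_prod _ _ fun i _ => Finset.prod_ne_zero_iff.mp hy i (Finset.mem_univ i)]
      rfl
  simp only [H2, hlog, Finset.sum_neg_distrib]
  rw [Finset.sum_comm]
  congr! 2 with i
  rw [← sum_law_mul (piWeight p) (fun y => y i) fun a => Real.logb 2 (p i a),
    law_piWeight_eval hp]

lemma entropy_piWeight_map {α : ι → Type} [∀ i, Fintype (α i)] (hp : ∀ i, IsPMF (p i))
    (f : ∀ i, Y i → α i) :
    entropy (piWeight p) (fun y i => f i (y i)) = ∑ i, entropy (p i) (f i) := by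
  rw [entropy, law_piWeight_map, H2_piWeight fun i => (hp i).law (f i)]
  rfl

lemma entropy_piWeight_eval {α : Type} [Fintype α] (hp : ∀ i, IsPMF (p i)) (i : ι)
    (f : Y i → α) : entropy (piWeight p) (fun y => f (y i)) = entropy (p i) f := by
  rw [entropy_comp (piWeight p) (fun y => y i), law_piWeight_eval hp]

lemma condEntropy_piWeight_map {α β : ι → Type} [∀ i, Fintype (α i)] [∀ i, Fintype (β i)]
    (hp : ∀ i, IsPMF (p i)) (f : ∀ i, Y i → α i) (g : ∀ i, Y i → β i) :
    condEntropy (piWeight p) (fun y i => f i (y i)) (fun y i => g i (y i)) =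
      ∑ i, condEntropy (piWeight p) (fun y => f i (y i)) fun y => g i (y i) := by
  have hzip : entropy (piWeight p) (fun y => ((fun i => f i (y i)), fun i => g i (y i))) =
      entropy (piWeight p) fun y i => (f i (y i), g i (y i)) :=
    entropy_congr fun y y' => by simp only [Prod.mk.injEq, funext_iff, forall_and]
  simp only [condEntropy, hzip, Finset.sum_sub_distrib]
  rw [entropy_piWeight_map hp g, entropy_piWeight_map hp fun i y => (f i y, g i y)]
  simp only [entropy_piWeight_eval hp _ (g _),
    entropy_piWeight_eval hp _ fun y => (f _ y, g _ y)]

lemma isMarkovChain_piWeight {α β γ : Type} [Finite α] [Finite γ] (p : ∀ i, Y i → ℝ) (i : ι)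
    (f : Y i → α) (g : Y i → β) (u : β → (∀ j : {j // j ≠ i}, Y j) → γ) :
    IsMarkovChain (piWeight p) (fun y => f (y i)) (fun y => g (y i))
      (fun y => u (g (y i)) fun j => y j) := by
  classical
  refine .of_law_eq_mul (fun a b => law (p i) (fun y => (f y, g y)) (a, b))
    (fun b c => law (piWeight fun j : {j // j ≠ i} => p j) (u b) c) fun a b c => ?_
  rw [law_piWeight_splitAt p i fun y r => (f y, g y, u (g y) r)]
  simp only [law_eq_sum_ite, Fintype.sum_prod_type, Finset.sum_mul_sum]
  refine Finset.sum_congr rfl fun y _ => Finset.sum_congr rfl fun r _ => ?_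
  by_cases hb : g y = b
  · simp [hb, ← ite_and, and_comm]
  · simp [hb]

end Independent

section SingleLetterization

/-- The auxiliary variable `U_i = (W, (Z_j)_{j ≠ i})` for `W = F((X_j)_j)`, on the space of
families of pairs `(X_j, Z_j)`. -/
def auxVar {ι C : Type} {X Z : ι → Type} (F : (∀ i, X i) → C) (i : ι)
    (y : ∀ i, X i × Z i) : C × (∀ j : {j // j ≠ i}, Z j) :=
  (F fun j => (y j).1, fun j => (y j).2)

lemma auxVar_prodMk_dite {ι C Z : Type} {X : ι → Type} [DecidableEq ι] (F : (∀ i, X i) → C) (i : ι)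
    (x : ∀ i, X i) (t : Z) (z : {j // j ≠ i} → Z) :
    auxVar F i (fun j => (x j, if h : j = i then t else z ⟨j, h⟩)) = (F x, z) :=
  congrArg (F x, ·) (funext fun j => dif_neg j.2)

lemma prodMk_snd_auxVar_eq_iff {ι C : Type} {X Z : ι → Type} (F : (∀ i, X i) → C) (i : ι)
    (y y' : ∀ i, X i × Z i) :
    ((y i).2, auxVar F i y) = ((y' i).2, auxVar F i y') ↔
      (F fun j => (y j).1, fun j => (y j).2) = (F fun j => (y' j).1, fun j => (y' j).2) := by
  simp only [auxVar, Prod.mk.injEq, funext_iff, Subtype.forall]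
  grind

variable {ι C : Type} [Fintype ι] [DecidableEq ι]
  {X Z : ι → Type} [∀ i, Fintype (X i)] [∀ i, Fintype (Z i)] {p : ∀ i, X i × Z i → ℝ}

lemma isMarkovChain_auxVar [Finite C] (p : ∀ i, X i × Z i → ℝ) (F : (∀ i, X i) → C) (i : ι) :
    IsMarkovChain (piWeight p) (fun y => (y i).2) (fun y => (y i).1) (auxVar F i) := by
  have haux : auxVar F i = fun y : ∀ i, X i × Z i =>
      (F ((Equiv.piSplitAt i X).symm ((y i).1, fun j => (y j).1)),
        fun j : {j // j ≠ i} => (y j).2) := by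
    ext1 y
    exact congrArg (F · , _) ((Equiv.piSplitAt i X).symm_apply_apply fun j => (y j).1).symm
  rw [haux]
  exact isMarkovChain_piWeight p i Prod.snd Prod.fst fun x r =>
    (F ((Equiv.piSplitAt i X).symm (x, fun j => (r j).1)), fun j => (r j).2)

lemma MI2_sub_MI2_auxVar [Fintype C] (hp : ∀ i, IsPMF (p i)) (F : (∀ i, X i) → C) (i : ι) :
    MI2 (law (piWeight p) fun y => ((y i).1, auxVar F i y)) -
        MI2 (law (piWeight p) fun y => ((y i).2, auxVar F i y)) =
      condEntropy (piWeight p) (fun y => (y i).1) (fun y => (y i).2) -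
        condEntropy (piWeight p) (fun y => (y i).1)
          fun y => (F fun j => (y j).1, fun j => (y j).2) := by
  rw [(isMarkovChain_auxVar p F i).MI2_sub_MI2 (IsPMF.piWeight hp).1,
    condEntropy_congr_right _ (prodMk_snd_auxVar_eq_iff F i)]

theorem rate_single_letterization_general [Fintype C] (hp : ∀ i, IsPMF (p i))
    (F : (∀ i, X i) → C) :
    ∑ i, (MI2 (law (piWeight p) fun y => ((y i).1, auxVar F i y)) -
        MI2 (law (piWeight p) fun y => ((y i).2, auxVar F i y))) ≤
      Real.logb 2 (Fintype.card C) := by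
  set P := piWeight p
  have hP : IsPMF P := IsPMF.piWeight hp
  let Xs : (∀ i, X i × Z i) → ∀ i, X i := fun y i => (y i).1
  let Zs : (∀ i, X i × Z i) → ∀ i, Z i := fun y i => (y i).2
  calc _ = ∑ i, condEntropy P (fun y => (y i).1) (fun y => (y i).2) -
        ∑ i, condEntropy P (fun y => (y i).1) (fun y => (F (Xs y), Zs y)) := by
        rw [← Finset.sum_sub_distrib]
        exact Finset.sum_congr rfl fun i _ => MI2_sub_MI2_auxVar hp F i
    _ ≤ condEntropy P Xs Zs - condEntropy P Xs (fun y => (F (Xs y), Zs y)) := by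
        rw [← condEntropy_piWeight_map hp (fun _ => Prod.fst) fun _ => Prod.snd]
        exact sub_le_sub_left (condEntropy_pi_le_sum hP.1 (fun i y => (y i).1) _) _
    _ = condEntropy P (fun y => F (Xs y)) Zs :=
        condEntropy_sub_condEntropy_prodMk_comp P Xs Zs F
    _ ≤ Real.logb 2 (Fintype.card C) := condEntropy_le_logb_card hP _ _

end SingleLetterization

section JointLaws

lemma sum_pi_triple_splitAt {ι A B Z : Type} [Fintype ι] [DecidableEq ι] [Fintype A] [Fintype B]
    [Fintype Z] (i : ι) (φ : (ι → (A × B) × Z) → ℝ) :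
    ∑ y, φ y = ∑ a : ι → A, ∑ b : ι → B, ∑ t : Z, ∑ z : {j // j ≠ i} → Z,
      φ fun j => ((a j, b j), if h : j = i then t else z ⟨j, h⟩) := by
  rw [← (((Equiv.arrowProdEquivProdArrow ι (fun _ => A × B) (fun _ => Z)).trans
    ((Equiv.arrowProdEquivProdArrow ι (fun _ => A) (fun _ => B)).prodCongr
      (Equiv.funSplitAt i Z))).symm).sum_comp]
  simp only [Fintype.sum_prod_type]
  refine Finset.sum_congr rfl fun a _ => Finset.sum_congr rfl fun b _ =>
    Finset.sum_congr rfl fun t _ => Finset.sum_congr rfl fun z _ =>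
      congrArg φ (funext fun j => Prod.ext rfl ?_)
  exact Equiv.funSplitAt_symm_apply i Z (t, z) j

variable {Xr Xh Z : Type} [Fintype Xr] [Fintype Xh] [Fintype Z] (p : Xr × Xh × Z → ℝ)
  (n M : ℕ) (F : (Fin n → Xr × Xh) → Fin M) (i : Fin n)

lemma jointSourceAux_eq_law [DecidableEq Xr] [DecidableEq Xh] :
    jointSourceAux p n M F i =
      law (piWeight fun (_ : Fin n) (y : (Xr × Xh) × Z) => p (y.1.1, y.1.2, y.2))
        fun y => ((y i).1, auxVar F i y) := by
  classical
  ext ⟨⟨a, b⟩, w, z⟩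
  rw [law_eq_sum_ite, sum_pi_triple_splitAt i]
  refine Finset.sum_congr rfl fun xr _ => Finset.sum_congr rfl fun xh _ =>
    Finset.sum_congr rfl fun t _ => ?_
  simp [piWeight, auxVar_prodMk_dite F i fun j => (xr j, xh j), ite_and]

lemma jointSideAux_eq_law :
    jointSideAux p n M F i =
      law (piWeight fun (_ : Fin n) (y : (Xr × Xh) × Z) => p (y.1.1, y.1.2, y.2))
        fun y => ((y i).2, auxVar F i y) := by
  classical
  ext ⟨t, w, z⟩
  rw [law_eq_sum_ite, sum_pi_triple_splitAt i]
  refine Finset.sum_congr rfl fun xr _ => Finset.sum_congr rfl fun xh _ => ?_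
  simp [piWeight, auxVar_prodMk_dite F i fun j => (xr j, xh j), ite_and]

end JointLaws

/-- Single-letterization of the rate (Wyner–Ziv-type converse step): for i.i.d. triples
`(X_{r,i}, X_{h,i}, Z_i)`, `1 ≤ i ≤ n`, and any function `W` of `(X_r^n, X_h^n)` taking
at most `M` values,
`log₂ M ≥ Σ_{i=1}^n [ I(X_{r,i}, X_{h,i} ; U_i) − I(Z_i ; U_i) ]` where
`U_i = (W, Z_1, …, Z_{i-1}, Z_{i+1}, …, Z_n)`. -/
theorem rate_single_letterization {Xr Xh Z : Type}
    [Fintype Xr] [Fintype Xh] [Fintype Z]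
    [Nonempty Xr] [Nonempty Xh] [Nonempty Z]
    [DecidableEq Xr] [DecidableEq Xh]
    (p : Xr × Xh × Z → ℝ) (hp : IsPMF p)
    (n M : ℕ) (hn : 0 < n) (hM : 0 < M)
    (F : (Fin n → Xr × Xh) → Fin M) :
    ∑ i : Fin n, (MI2 (jointSourceAux p n M F i) - MI2 (jointSideAux p n M F i)) ≤
      Real.logb 2 M := by
  simp only [jointSourceAux_eq_law, jointSideAux_eq_law]
  simpa only [Fintype.card_fin] using rate_single_letterization_general
    (fun _ => ⟨fun y => hp.1 _, by simpa [Fintype.sum_prod_type] using hp.2⟩) F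
end
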